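/- Let p ∈ (0,1/2], r ∈ ℕ with r ≥ 1, and δ > 0. Suppose f : {0,1}^n → {−1,0,1} satisfies I_S(f^{≤r}) ≤ δ for every S ⊆ [n] with |S| ≤ r. Then 𝔼_{μ_p}[(f^{≤r})²] ≤ 5^r·δ^{1/3}·𝔼_{μ_p}[f²]. -/

import Mathlib

open Finset

namespace GlobalHC

variable {n : ℕ}

/-- Expectation with respect to the `p`-biased measure on `{0,1}^n`. -/
noncomputable def Ep (p : ℝ) (f : (Fin n → Bool) → ℝ) : ℝ :=
  ∑ x : Fin n → Bool, (∏ i, if x i then p else 1 - p) * f x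

/-- The `r`-norm with respect to the `p`-biased measure. -/
noncomputable def pnorm (p r : ℝ) (f : (Fin n → Bool) → ℝ) : ℝ :=
  (Ep p fun x => |f x| ^ r) ^ (1 / r)

/-- The `p`-biased character `χ_S`. -/
noncomputable def chi (p : ℝ) (S : Finset (Fin n)) (x : Fin n → Bool) : ℝ :=
  ∏ i ∈ S, ((if x i then (1 : ℝ) else 0) - p) / Real.sqrt (p * (1 - p))

/-- The `p`-biased Fourier coefficient `f̂(S)`. -/
noncomputable def coeff (p : ℝ) (f : (Fin n → Bool) → ℝ) (S : Finset (Fin n)) : ℝ :=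
  Ep p fun x => f x * chi p S x

/-- The derivative `D_S f = Σ_{T ⊇ S} f̂(T) χ_{T∖S}`. -/
noncomputable def derivS (p : ℝ) (S : Finset (Fin n)) (f : (Fin n → Bool) → ℝ) :
    (Fin n → Bool) → ℝ :=
  fun x => ∑ T ∈ Finset.univ.filter (fun T => S ⊆ T), coeff p f T * chi p (T \ S) x

/-- The generalised influence `I_S(f) = σ^{-2|S|} Σ_{T ⊇ S} f̂(T)²`. -/
noncomputable def genInf (p : ℝ) (S : Finset (Fin n)) (f : (Fin n → Bool) → ℝ) : ℝ :=
  (∑ T ∈ Finset.univ.filter (fun T => S ⊆ T), coeff p f T ^ 2) / (p * (1 - p)) ^ S.card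

/-- The noise operator `T_ρ f = Σ_S ρ^{|S|} f̂(S) χ_S`. -/
noncomputable def noise (p ρ : ℝ) (f : (Fin n → Bool) → ℝ) : (Fin n → Bool) → ℝ :=
  fun x => ∑ S : Finset (Fin n), ρ ^ S.card * coeff p f S * chi p S x

/-- The degree-`r` truncation `f^{≤ r}`. -/
noncomputable def trunc (p : ℝ) (r : ℕ) (f : (Fin n → Bool) → ℝ) : (Fin n → Bool) → ℝ :=
  fun x => ∑ S ∈ Finset.univ.filter (fun S : Finset (Fin n) => S.card ≤ r),
    coeff p f S * chi p S x

/-- The restriction `f_{J→1}` setting all coordinates in `J` to `1`. -/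
def restrict1 (J : Finset (Fin n)) (f : (Fin n → Bool) → ℝ) : (Fin n → Bool) → ℝ :=
  fun x => f (fun i => if i ∈ J then true else x i)

/-- `f` is `(r,δ)`-global (for the `p`-biased measure). -/
def IsGlobal (p r δ : ℝ) (f : (Fin n → Bool) → ℝ) : Prop :=
  ∀ J : Finset (Fin n), (J.card : ℝ) ≤ r → Ep p (restrict1 J f) ≤ Ep p f + δ

/-- The total influence `I[f] = Σ_i Pr_{μ_p}[f(x ⊕ e_i) ≠ f(x)]`. -/
noncomputable def totalInf (p : ℝ) (f : (Fin n → Bool) → ℝ) : ℝ :=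
  ∑ i : Fin n, Ep p fun x => if f (Function.update x i (!x i)) = f x then 0 else 1

/-- Noise stability `Stab_ρ(f) = Σ_S ρ^{|S|} f̂(S)²` (w.r.t. `μ_p`). -/
noncomputable def stab (p ρ : ℝ) (f : (Fin n → Bool) → ℝ) : ℝ :=
  ∑ S : Finset (Fin n), ρ ^ S.card * coeff p f S ^ 2

/-- `f` is monotone. -/
def Mono (f : (Fin n → Bool) → ℝ) : Prop :=
  ∀ x y : Fin n → Bool, (∀ i, x i ≤ y i) → f x ≤ f y

/-!
Write `A = E[(f^{≤r})²] = E[f · f^{≤r}]`. Two applications of Cauchy–Schwarz, the second one on the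
support of `f`, give `A⁴ ≤ (E f²)² · Pr[f ≠ 0] · E[(f^{≤r})⁴]`. A hypercontractive inequality for
functions of low degree and small generalised influences bounds the fourth moment by `64^r δ A`, so
one factor `A` cancels; if `|f| ≥ 1` on its support then `Pr[f ≠ 0] ≤ E f²`, and a cube root
finishes the proof.

The hypercontractive inequality is
`E[f⁴] ≤ ∑_S (3/σ²)^{|S|} (∑_{T ⊇ S} 4^{|T∖S|} f̂(T)²)²`.
It is proved for `E[f² g²]`, one coordinate at a time: since `χ_i² = 1 + κ χ_i` with
`κ = (1 - 2p)/σ`, the average of `(A + χ_i B)² (C + χ_i D)²` over the coordinate `i` is a polynomial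
in `A, B, C, D, κ`, and `κ² = 1/σ² - 4` is absorbed by the coefficient `3/σ²` of `B² D²`.
-/

section Expectation

variable {p : ℝ}

lemma Ep_add (F G : (Fin n → Bool) → ℝ) :
    Ep p (fun x => F x + G x) = Ep p F + Ep p G := by
  simp only [Ep, mul_add, sum_add_distrib]

lemma Ep_const_mul (c : ℝ) (F : (Fin n → Bool) → ℝ) :
    Ep p (fun x => c * F x) = c * Ep p F := by
  simp only [Ep, mul_sum, mul_left_comm]

lemma Ep_sum {ι : Type*} (s : Finset ι) (F : ι → (Fin n → Bool) → ℝ) :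
    Ep p (fun x => ∑ k ∈ s, F k x) = ∑ k ∈ s, Ep p (F k) := by
  simp only [Ep, mul_sum]
  exact sum_comm

lemma Ep_const (c : ℝ) : Ep p (fun _ : Fin n → Bool => c) = c := by
  have total_weight : ∑ x : Fin n → Bool, ∏ i, (if x i then p else 1 - p) = 1 := by
    rw [← Fintype.prod_sum fun (_ : Fin n) (b : Bool) => if b then p else 1 - p]
    simp
  rw [Ep, ← sum_mul, total_weight, one_mul]

lemma weight_nonneg (hp₀ : 0 ≤ p) (hp₁ : p ≤ 1) (x : Fin n → Bool) :
    0 ≤ ∏ i, if x i then p else 1 - p :=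
  prod_nonneg fun i _ => by split_ifs <;> linarith

lemma Ep_mono (hp₀ : 0 ≤ p) (hp₁ : p ≤ 1) {F G : (Fin n → Bool) → ℝ} (h : ∀ x, F x ≤ G x) :
    Ep p F ≤ Ep p G :=
  sum_le_sum fun x _ => mul_le_mul_of_nonneg_left (h x) (weight_nonneg hp₀ hp₁ x)

lemma Ep_nonneg (hp₀ : 0 ≤ p) (hp₁ : p ≤ 1) {F : (Fin n → Bool) → ℝ} (h : ∀ x, 0 ≤ F x) :
    0 ≤ Ep p F :=
  sum_nonneg fun x _ => mul_nonneg (weight_nonneg hp₀ hp₁ x) (h x)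

lemma Ep_mul_sq_le (hp₀ : 0 ≤ p) (hp₁ : p ≤ 1) (F G : (Fin n → Bool) → ℝ) :
    Ep p (fun x => F x * G x) ^ 2 ≤ Ep p (fun x => F x ^ 2) * Ep p (fun x => G x ^ 2) := by
  have hw := weight_nonneg (n := n) hp₀ hp₁
  exact sum_sq_le_sum_mul_sum_of_sq_le_mul _
    (fun x _ => mul_nonneg (hw x) (sq_nonneg _)) (fun x _ => mul_nonneg (hw x) (sq_nonneg _))
    fun x _ => le_of_eq (by ring)

/-- Cauchy–Schwarz twice, the second time against the indicator of the support of `F`. -/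
lemma Ep_mul_pow_four_le (hp₀ : 0 ≤ p) (hp₁ : p ≤ 1) (F G : (Fin n → Bool) → ℝ) :
    Ep p (fun x => F x * G x) ^ 4 ≤
      Ep p (fun x => F x ^ 2) ^ 2 * Ep p (fun x => if F x = 0 then 0 else 1) *
        Ep p (fun x => G x ^ 4) := by
  set s : (Fin n → Bool) → ℝ := fun x => if F x = 0 then 0 else 1
  have hs : ∀ x, s x ^ 2 = s x := fun x => by simp only [s]; split_ifs <;> norm_num
  have hFs : ∀ x, F x * (s x * G x) = F x * G x := fun x => by simp only [s]; split_ifs <;> simp [*]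
  have first : Ep p (fun x => F x * G x) ^ 2 ≤
      Ep p (fun x => F x ^ 2) * Ep p (fun x => s x * G x ^ 2) := by
    simpa only [hFs, mul_pow, hs] using Ep_mul_sq_le hp₀ hp₁ F (fun x => s x * G x)
  have second : Ep p (fun x => s x * G x ^ 2) ^ 2 ≤ Ep p s * Ep p (fun x => G x ^ 4) := by
    have h := Ep_mul_sq_le hp₀ hp₁ s (fun x => G x ^ 2)
    simp only [hs, ← pow_mul] at h
    exact h
  calc Ep p (fun x => F x * G x) ^ 4 = (Ep p (fun x => F x * G x) ^ 2) ^ 2 := by ring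
    _ ≤ (Ep p (fun x => F x ^ 2) * Ep p (fun x => s x * G x ^ 2)) ^ 2 := by gcongr
    _ = Ep p (fun x => F x ^ 2) ^ 2 * Ep p (fun x => s x * G x ^ 2) ^ 2 := mul_pow _ _ _
    _ ≤ Ep p (fun x => F x ^ 2) ^ 2 * (Ep p s * Ep p (fun x => G x ^ 4)) := by gcongr
    _ = _ := (mul_assoc _ _ _).symm

end Expectation

section Characters

variable {p : ℝ}

/-- The character of a single coordinate, as a function of the bit: `χ_i(x) = bitChar p (x i)`. -/
noncomputable def bitChar (p : ℝ) (b : Bool) : ℝ :=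
  ((if b then (1 : ℝ) else 0) - p) / Real.sqrt (p * (1 - p))

/-- The skewness `κ = 𝔼[χ_i³]` of a single `p`-biased character. -/
noncomputable def skewness (p : ℝ) : ℝ := (1 - 2 * p) / Real.sqrt (p * (1 - p))

lemma bitChar_sq (hp₀ : 0 < p) (hp₁ : p < 1) (b : Bool) :
    bitChar p b ^ 2 = 1 + skewness p * bitChar p b := by
  have hq : 0 < p * (1 - p) := mul_pos hp₀ (sub_pos.2 hp₁)
  have hσ : Real.sqrt (p * (1 - p)) ≠ 0 := (Real.sqrt_pos.2 hq).ne'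
  have hσ_sq := Real.sq_sqrt hq.le
  cases b <;> simp only [bitChar, skewness, if_true, Bool.false_eq_true, if_false] <;>
    field_simp <;> rw [hσ_sq] <;> ring

lemma skewness_sq (hp₀ : 0 < p) (hp₁ : p < 1) :
    skewness p ^ 2 = 1 / (p * (1 - p)) - 4 := by
  have hq : 0 < p * (1 - p) := mul_pos hp₀ (sub_pos.2 hp₁)
  rw [skewness, div_pow, Real.sq_sqrt hq.le, div_eq_iff hq.ne', sub_mul, div_mul_cancel₀ _ hq.ne']
  ring

lemma bitWeight_mul_one_add_bitChar_mul_bitChar (hp₀ : 0 < p) (hp₁ : p < 1) (b c : Bool) :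
    (if b then p else 1 - p) * (1 + bitChar p b * bitChar p c) = if b = c then 1 else 0 := by
  have hq : 0 < p * (1 - p) := mul_pos hp₀ (sub_pos.2 hp₁)
  have hσ : Real.sqrt (p * (1 - p)) ≠ 0 := (Real.sqrt_pos.2 hq).ne'
  have hσ_sq := Real.sq_sqrt hq.le
  cases b <;> cases c <;>
    simp only [bitChar, if_true, Bool.false_eq_true, Bool.true_eq_false, if_false] <;>
    field_simp <;> rw [hσ_sq] <;> ring

lemma chi_eq_prod (S : Finset (Fin n)) (x : Fin n → Bool) :
    chi p S x = ∏ i ∈ S, bitChar p (x i) := rfl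

lemma chi_empty (x : Fin n → Bool) : chi p ∅ x = 1 := prod_empty

lemma chi_insert {i : Fin n} {S : Finset (Fin n)} (hi : i ∉ S) (x : Fin n → Bool) :
    chi p (insert i S) x = bitChar p (x i) * chi p S x :=
  prod_insert hi

lemma chi_update {i : Fin n} {S : Finset (Fin n)} (hi : i ∉ S) (x : Fin n → Bool) (b : Bool) :
    chi p S (Function.update x i b) = chi p S x :=
  prod_congr rfl fun j hj => by rw [Function.update_of_ne (ne_of_mem_of_not_mem hj hi)]

lemma Ep_bitChar_mul_eq_zero (i : Fin n) {V : (Fin n → Bool) → ℝ}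
    (hV : ∀ x b, V (Function.update x i b) = V x) :
    Ep p (fun x => bitChar p (x i) * V x) = 0 := by
  refine sum_involution (fun x _ => Function.update x i (!x i)) (fun x _ => ?_)
    (fun x _ _ h => by simpa using congrFun h i) (fun _ _ => mem_univ _) (fun x _ => by simp)
  have weight_erase : ∏ j ∈ univ.erase i, (if Function.update x i (!x i) j then p else 1 - p) =
      ∏ j ∈ univ.erase i, (if x j then p else 1 - p) :=
    prod_congr rfl fun j hj => by rw [Function.update_of_ne (ne_of_mem_erase hj)]
  rw [← mul_prod_erase univ _ (mem_univ i), ← mul_prod_erase univ _ (mem_univ i), weight_erase]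
  simp only [hV, Function.update_self]
  cases x i <;> simp only [bitChar, Bool.not_true, Bool.not_false, if_true, Bool.false_eq_true,
    if_false] <;> ring

lemma Ep_chi_mul_chi_of_mem_of_notMem {S T : Finset (Fin n)} {i : Fin n} (hS : i ∈ S)
    (hT : i ∉ T) : Ep p (fun x => chi p S x * chi p T x) = 0 := by
  have hi := notMem_erase i S
  rw [← insert_erase hS]
  simp only [chi_insert hi, mul_assoc]
  exact Ep_bitChar_mul_eq_zero i fun x b => by rw [chi_update hi, chi_update hT]

lemma Ep_chi_sq (hp₀ : 0 < p) (hp₁ : p < 1) (S : Finset (Fin n)) :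
    Ep p (fun x => chi p S x ^ 2) = 1 := by
  induction S using Finset.induction_on with
  | empty => simp only [chi_empty, Ep_const, one_pow]
  | insert i S hi ih =>
    have expand : ∀ x, chi p (insert i S) x ^ 2 =
        chi p S x ^ 2 + bitChar p (x i) * (skewness p * chi p S x ^ 2) := fun x => by
      rw [chi_insert hi, mul_pow, bitChar_sq hp₀ hp₁]; ring
    simp only [expand]
    rw [Ep_add, ih, Ep_bitChar_mul_eq_zero i fun x b => by rw [chi_update hi], add_zero]

lemma Ep_chi_mul_chi (hp₀ : 0 < p) (hp₁ : p < 1) (S T : Finset (Fin n)) :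
    Ep p (fun x => chi p S x * chi p T x) = if S = T then 1 else 0 := by
  split_ifs with h
  · subst h
    simpa only [sq] using Ep_chi_sq hp₀ hp₁ S
  · rcases not_and_or.1 (mt (fun hST => Subset.antisymm hST.1 hST.2) h) with hST | hTS
    · obtain ⟨i, hS, hT⟩ := not_subset.1 hST
      exact Ep_chi_mul_chi_of_mem_of_notMem hS hT
    · obtain ⟨i, hT, hS⟩ := not_subset.1 hTS
      simpa only [mul_comm] using Ep_chi_mul_chi_of_mem_of_notMem (p := p) hT hS

lemma sum_coeff_mul_chi (hp₀ : 0 < p) (hp₁ : p < 1) (f : (Fin n → Bool) → ℝ)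
    (x : Fin n → Bool) : ∑ S, coeff p f S * chi p S x = f x := by
  have kernel : ∀ y : Fin n → Bool,
      ∑ S, chi p S y * chi p S x = ∏ i, (1 + bitChar p (y i) * bitChar p (x i)) := fun y => by
    simp only [prod_one_add, powerset_univ, chi_eq_prod, prod_mul_distrib]
  have weight_mul_kernel : ∀ y : Fin n → Bool,
      (∏ i, if y i then p else 1 - p) * ∏ i, (1 + bitChar p (y i) * bitChar p (x i)) =
        if y = x then 1 else 0 := fun y => by
    simp only [← prod_mul_distrib, bitWeight_mul_one_add_bitChar_mul_bitChar hp₀ hp₁,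
      Fintype.prod_ite_zero, prod_const_one, funext_iff]
  calc ∑ S, coeff p f S * chi p S x
      = ∑ y, (∏ i, if y i then p else 1 - p) * f y * ∑ S, chi p S y * chi p S x := by
        simp only [coeff, Ep, sum_mul, mul_sum, mul_assoc]
        exact sum_comm
    _ = ∑ y, f y * if y = x then 1 else 0 := by
        refine sum_congr rfl fun y _ => ?_
        rw [kernel, ← weight_mul_kernel]; ring
    _ = f x := by simp

lemma Ep_mul_eq_sum_coeff (hp₀ : 0 < p) (hp₁ : p < 1) (f g : (Fin n → Bool) → ℝ) :
    Ep p (fun x => f x * g x) = ∑ S, coeff p f S * coeff p g S := by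
  calc Ep p (fun x => f x * g x) = Ep p (fun x => ∑ S, coeff p g S * (f x * chi p S x)) := by
        congr! 2 with x
        rw [← sum_coeff_mul_chi hp₀ hp₁ g x, mul_sum]
        exact sum_congr rfl fun S _ => mul_left_comm _ _ _
    _ = ∑ S, coeff p f S * coeff p g S := by
        simp only [Ep_sum, Ep_const_mul]
        exact sum_congr rfl fun S _ => mul_comm _ _

end Characters

section Truncation

variable {p : ℝ} {r : ℕ}

/-- The function `f` has degree at most `r`: its Fourier coefficients vanish above level `r`. -/
def HasDegreeLE (p : ℝ) (r : ℕ) (f : (Fin n → Bool) → ℝ) : Prop :=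
  ∀ S, r < S.card → coeff p f S = 0

lemma coeff_trunc (hp₀ : 0 < p) (hp₁ : p < 1) (f : (Fin n → Bool) → ℝ) (S : Finset (Fin n)) :
    coeff p (trunc p r f) S = if S.card ≤ r then coeff p f S else 0 := by
  rw [coeff]
  simp only [trunc, sum_mul, mul_assoc, Ep_sum, Ep_const_mul, Ep_chi_mul_chi hp₀ hp₁]
  simp

lemma hasDegreeLE_trunc (hp₀ : 0 < p) (hp₁ : p < 1) (f : (Fin n → Bool) → ℝ) :
    HasDegreeLE p r (trunc p r f) := fun S hS => by
  rw [coeff_trunc hp₀ hp₁, if_neg hS.not_ge]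

lemma Ep_mul_trunc (hp₀ : 0 < p) (hp₁ : p < 1) (f : (Fin n → Bool) → ℝ) :
    Ep p (fun x => f x * trunc p r f x) = Ep p (fun x => trunc p r f x ^ 2) := by
  simp only [sq, Ep_mul_eq_sum_coeff hp₀ hp₁, coeff_trunc hp₀ hp₁]
  exact sum_congr rfl fun S _ => by split_ifs <;> simp

lemma HasDegreeLE.pow_mul_coeff_sq_le {f : (Fin n → Bool) → ℝ} (hf : HasDegreeLE p r f) {ρ : ℝ}
    (hρ : 1 ≤ ρ) {k : ℕ} {S : Finset (Fin n)} (hk : k ≤ S.card) :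
    ρ ^ k * coeff p f S ^ 2 ≤ ρ ^ r * coeff p f S ^ 2 := by
  rcases le_or_gt S.card r with hS | hS
  · have hkr : k ≤ r := hk.trans hS
    gcongr
  · simp [hf S hS]

lemma HasDegreeLE.stab_le (hp₀ : 0 < p) (hp₁ : p < 1) {f : (Fin n → Bool) → ℝ}
    (hf : HasDegreeLE p r f) {ρ : ℝ} (hρ : 1 ≤ ρ) :
    stab p ρ f ≤ ρ ^ r * Ep p (fun x => f x ^ 2) := by
  simp only [sq, Ep_mul_eq_sum_coeff hp₀ hp₁, mul_sum, stab]
  simpa only [sq] using sum_le_sum fun S _ => hf.pow_mul_coeff_sq_le hρ (le_refl S.card)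

end Truncation

section Influence

variable {p : ℝ} {r : ℕ}

lemma pow_card_mul_genInf (hp₀ : 0 < p) (hp₁ : p < 1) (S : Finset (Fin n))
    (f : (Fin n → Bool) → ℝ) :
    (p * (1 - p)) ^ S.card * genInf p S f = ∑ T with S ⊆ T, coeff p f T ^ 2 :=
  mul_div_cancel₀ _ (pow_pos (mul_pos hp₀ (sub_pos.2 hp₁)) _).ne'

lemma genInf_nonneg (hp₀ : 0 ≤ p) (hp₁ : p ≤ 1) (S : Finset (Fin n)) (f : (Fin n → Bool) → ℝ) :
    0 ≤ genInf p S f :=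
  div_nonneg (sum_nonneg fun _ _ => sq_nonneg _) (pow_nonneg (mul_nonneg hp₀ (sub_nonneg.2 hp₁)) _)

lemma HasDegreeLE.genInf_eq_zero {f : (Fin n → Bool) → ℝ} (hf : HasDegreeLE p r f)
    {S : Finset (Fin n)} (hS : r < S.card) : genInf p S f = 0 := by
  refine div_eq_zero_iff.2 (Or.inl (sum_eq_zero fun T hT => ?_))
  rw [hf T (hS.trans_le (card_le_card (mem_filter.1 hT).2)), zero_pow two_ne_zero]

lemma HasDegreeLE.genInf_le (hp₀ : 0 ≤ p) (hp₁ : p ≤ 1) {f : (Fin n → Bool) → ℝ}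
    (hf : HasDegreeLE p r f) {δ : ℝ} (hinf : ∀ S, S.card ≤ r → genInf p S f ≤ δ)
    (S : Finset (Fin n)) : genInf p S f ≤ δ := by
  rcases le_or_gt S.card r with hS | hS
  · exact hinf S hS
  · rw [hf.genInf_eq_zero hS]
    exact (genInf_nonneg hp₀ hp₁ ∅ f).trans (hinf ∅ (by simp))

lemma sum_pow_card_mul_genInf (hp₀ : 0 < p) (hp₁ : p < 1) (c : ℝ) (f : (Fin n → Bool) → ℝ) :
    ∑ S : Finset (Fin n), c ^ S.card * ((p * (1 - p)) ^ S.card * genInf p S f) =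
      stab p (c + 1) f := by
  have binomial : ∀ T : Finset (Fin n), (c + 1) ^ T.card = ∑ S with S ⊆ T, c ^ S.card := fun T => by
    simpa [filter_subset_univ] using (sum_pow_mul_eq_add_pow c 1 T).symm
  simp only [pow_card_mul_genInf hp₀ hp₁, stab, binomial, mul_sum, sum_mul, sum_filter, mul_ite,
    ite_mul, mul_zero, zero_mul]
  exact sum_comm

end Influence

section Hypercontractivity

variable {p : ℝ} {i : Fin n} {U S : Finset (Fin n)}

/-- The multilinear polynomial `∑_{T ⊆ U} a(T) χ_T` in the coordinates of `U`, with an arbitrary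
coefficient family `a`, of which only the values on subsets of `U` matter. -/
noncomputable def fourierPoly (p : ℝ) (U : Finset (Fin n)) (a : Finset (Fin n) → ℝ)
    (x : Fin n → Bool) : ℝ :=
  ∑ T ∈ U.powerset, a T * chi p T x

/-- The weight `∑_{S ⊆ T ⊆ U} 4^{|T∖S|} a(T)²`, which is `‖T_2 D_S g‖₂²` for the polynomial
`g = ∑_{T ⊆ U} a(T) χ_T` when `S ⊆ U`. The sets `T` are parametrised by `T∖S`. -/
noncomputable def upWeight (U S : Finset (Fin n)) (a : Finset (Fin n) → ℝ) : ℝ :=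
  ∑ T ∈ (U \ S).powerset, 4 ^ T.card * a (S ∪ T) ^ 2

/-- The form `∑_{S ⊆ U} c^{|S|} N_S(a) N_S(b)`, where `N_S` is `upWeight U S`; for a suitable `c`
it dominates `𝔼[g² h²]` for the polynomials `g`, `h` with coefficients `a`, `b`. -/
noncomputable def upWeightForm (c : ℝ) (U : Finset (Fin n)) (a b : Finset (Fin n) → ℝ) : ℝ :=
  ∑ S ∈ U.powerset, c ^ S.card * (upWeight U S a * upWeight U S b)

lemma fourierPoly_insert (hi : i ∉ U) (a : Finset (Fin n) → ℝ) (x : Fin n → Bool) :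
    fourierPoly p (insert i U) a x =
      fourierPoly p U a x + bitChar p (x i) * fourierPoly p U (fun T => a (insert i T)) x := by
  rw [fourierPoly, sum_powerset_insert hi, fourierPoly, fourierPoly, mul_sum]
  congr 1
  refine sum_congr rfl fun T hT => ?_
  rw [chi_insert (notMem_mono (mem_powerset.1 hT) hi)]
  exact mul_left_comm _ _ _

lemma fourierPoly_update (hi : i ∉ U) (a : Finset (Fin n) → ℝ) (x : Fin n → Bool) (b : Bool) :
    fourierPoly p U a (Function.update x i b) = fourierPoly p U a x :=
  sum_congr rfl fun T hT => by rw [chi_update (notMem_mono (mem_powerset.1 hT) hi)]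

lemma fourierPoly_univ_coeff (hp₀ : 0 < p) (hp₁ : p < 1) (f : (Fin n → Bool) → ℝ)
    (x : Fin n → Bool) : fourierPoly p univ (coeff p f) x = f x := by
  rw [fourierPoly, powerset_univ, sum_coeff_mul_chi hp₀ hp₁]

lemma upWeight_nonneg (U S : Finset (Fin n)) (a : Finset (Fin n) → ℝ) : 0 ≤ upWeight U S a :=
  sum_nonneg fun _ _ => by positivity

lemma upWeight_insert_left (hU : i ∉ U) (hS : i ∉ S) (a : Finset (Fin n) → ℝ) :
    upWeight (insert i U) S a = upWeight U S a + 4 * upWeight U S (fun T => a (insert i T)) := by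
  have hi : i ∉ U \ S := fun h => hU (mem_sdiff.1 h).1
  rw [upWeight, insert_sdiff_of_notMem _ hS, sum_powerset_insert hi, upWeight, upWeight, mul_sum]
  congr 1
  refine sum_congr rfl fun T hT => ?_
  rw [card_insert_of_notMem (notMem_mono (mem_powerset.1 hT) hi), union_insert]
  ring

lemma upWeight_insert_insert (hU : i ∉ U) (a : Finset (Fin n) → ℝ) :
    upWeight (insert i U) (insert i S) a = upWeight U S (fun T => a (insert i T)) := by
  have hsdiff : insert i U \ insert i S = U \ S := by
    rw [insert_sdiff_insert, sdiff_insert_of_notMem hU]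
  simp only [upWeight, hsdiff, insert_union]

lemma upWeightForm_insert (hi : i ∉ U) (c : ℝ) (a b : Finset (Fin n) → ℝ) :
    upWeightForm c (insert i U) a b =
      upWeightForm c U a b + 4 * upWeightForm c U a (fun T => b (insert i T)) +
        4 * upWeightForm c U (fun T => a (insert i T)) b +
        (c + 16) * upWeightForm c U (fun T => a (insert i T)) (fun T => b (insert i T)) := by
  simp only [upWeightForm]
  rw [sum_powerset_insert hi]
  simp only [mul_sum, ← sum_add_distrib]
  refine sum_congr rfl fun S hS => ?_
  have hiS : i ∉ S := notMem_mono (mem_powerset.1 hS) hi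
  rw [card_insert_of_notMem hiS]
  simp only [upWeight_insert_left hi hiS, upWeight_insert_insert hi]
  ring

/-- The left side is the average over one coordinate of `(A + χ_i B)² (C + χ_i D)²`. -/
lemma sq_mul_sq_average_le (hp₀ : 0 < p) (hp₁ : p < 1) (A B C D : ℝ) :
    (A ^ 2 + B ^ 2) * (C ^ 2 + D ^ 2) +
        (2 * A * B + skewness p * B ^ 2) * (2 * C * D + skewness p * D ^ 2) ≤
      A ^ 2 * C ^ 2 + 4 * (A ^ 2 * D ^ 2) + 4 * (B ^ 2 * C ^ 2) +
        3 / (p * (1 - p)) * (B ^ 2 * D ^ 2) := by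
  have hκ : 3 / (p * (1 - p)) = 3 * skewness p ^ 2 + 12 := by
    rw [skewness_sq hp₀ hp₁]; ring
  rw [hκ]
  nlinarith [sq_nonneg (A * D - B * C), sq_nonneg (A * D - skewness p * (B * D)),
    sq_nonneg (B * C - skewness p * (B * D)), sq_nonneg (B * D)]

lemma Ep_sq_mul_sq_le (hp₀ : 0 < p) (hp₁ : p < 1) {A B C D : (Fin n → Bool) → ℝ}
    (hA : ∀ x b, A (Function.update x i b) = A x) (hB : ∀ x b, B (Function.update x i b) = B x)
    (hC : ∀ x b, C (Function.update x i b) = C x) (hD : ∀ x b, D (Function.update x i b) = D x) :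
    Ep p (fun x => (A x + bitChar p (x i) * B x) ^ 2 * (C x + bitChar p (x i) * D x) ^ 2) ≤
      Ep p (fun x => A x ^ 2 * C x ^ 2) + 4 * Ep p (fun x => A x ^ 2 * D x ^ 2) +
        4 * Ep p (fun x => B x ^ 2 * C x ^ 2) +
        3 / (p * (1 - p)) * Ep p (fun x => B x ^ 2 * D x ^ 2) := by
  set κ := skewness p
  have sq_eq : ∀ (b : Bool) (s t : ℝ), (s + bitChar p b * t) ^ 2 =
      (s ^ 2 + t ^ 2) + bitChar p b * (2 * s * t + κ * t ^ 2) := fun b s t => by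
    linear_combination t ^ 2 * bitChar_sq hp₀ hp₁ b
  have mul_eq : ∀ (b : Bool) (s t u v : ℝ), (s + bitChar p b * t) * (u + bitChar p b * v) =
      (s * u + t * v) + bitChar p b * (s * v + t * u + κ * (t * v)) := fun b s t u v => by
    linear_combination t * v * bitChar_sq hp₀ hp₁ b
  simp only [sq_eq, mul_eq]
  rw [Ep_add, Ep_bitChar_mul_eq_zero i fun x b => by rw [hA, hB, hC, hD], add_zero]
  simp only [← Ep_const_mul, ← Ep_add]
  exact Ep_mono hp₀.le hp₁.le fun x => sq_mul_sq_average_le hp₀ hp₁ _ _ _ _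

lemma Ep_fourierPoly_sq_mul_sq_le (hp₀ : 0 < p) (hp₁ : p < 1) (U : Finset (Fin n))
    (a b : Finset (Fin n) → ℝ) :
    Ep p (fun x => fourierPoly p U a x ^ 2 * fourierPoly p U b x ^ 2) ≤
      upWeightForm (3 / (p * (1 - p))) U a b := by
  induction U using Finset.induction_on generalizing a b with
  | empty => simp [fourierPoly, upWeightForm, upWeight, chi_empty, Ep_const]
  | insert i U hi ih =>
    have hc : 0 ≤ 3 / (p * (1 - p)) :=
      div_nonneg zero_le_three (mul_nonneg hp₀.le (sub_nonneg.2 hp₁.le))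
    set c := 3 / (p * (1 - p))
    set a' : Finset (Fin n) → ℝ := fun T => a (insert i T)
    set b' : Finset (Fin n) → ℝ := fun T => b (insert i T)
    simp only [fourierPoly_insert hi]
    calc _ ≤ _ := Ep_sq_mul_sq_le hp₀ hp₁ (fourierPoly_update hi a) (fourierPoly_update hi a')
          (fourierPoly_update hi b) (fourierPoly_update hi b')
      _ ≤ upWeightForm c U a b + 4 * upWeightForm c U a b' + 4 * upWeightForm c U a' b +
            (c + 16) * upWeightForm c U a' b' := by
          gcongr ?_ + 4 * ?_ + 4 * ?_ + ?_
          · exact ih a b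
          · exact ih a b'
          · exact ih a' b
          · exact mul_le_mul (le_add_of_nonneg_right (by norm_num)) (ih a' b')
              (Ep_nonneg hp₀.le hp₁.le fun _ => by positivity) (by positivity)
      _ = upWeightForm c (insert i U) a b := (upWeightForm_insert hi c a b).symm

lemma HasDegreeLE.upWeight_univ_le (hp₀ : 0 < p) (hp₁ : p < 1) {r : ℕ} {f : (Fin n → Bool) → ℝ}
    (hf : HasDegreeLE p r f) (S : Finset (Fin n)) :
    upWeight univ S (coeff p f) ≤ 4 ^ r * ((p * (1 - p)) ^ S.card * genInf p S f) := by
  have reindex : ∑ T ∈ (univ \ S).powerset, coeff p f (S ∪ T) ^ 2 =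
      ∑ T with S ⊆ T, coeff p f T ^ 2 := by
    refine sum_nbij' (S ∪ ·) (· \ S) ?_ ?_ ?_ ?_ fun _ _ => rfl
    · simp
    · simp [sdiff_subset_sdiff]
    · simp +contextual [union_sdiff_cancel_left, subset_sdiff, disjoint_comm]
    · simp +contextual
  rw [pow_card_mul_genInf hp₀ hp₁, ← reindex, mul_sum]
  exact sum_le_sum fun T _ =>
    hf.pow_mul_coeff_sq_le (by norm_num) (card_le_card subset_union_right)

lemma HasDegreeLE.upWeightForm_le (hp₀ : 0 < p) (hp₁ : p < 1) {r : ℕ} {δ : ℝ}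
    {f : (Fin n → Bool) → ℝ} (hf : HasDegreeLE p r f) (hinf : ∀ S, genInf p S f ≤ δ)
    {c : ℝ} (hc : 0 ≤ c) :
    upWeightForm (c / (p * (1 - p))) univ (coeff p f) (coeff p f) ≤
      16 ^ r * δ * stab p (c + 1) f := by
  have hq : 0 < p * (1 - p) := mul_pos hp₀ (sub_pos.2 hp₁)
  have h16 : (16 : ℝ) ^ r = 4 ^ r * 4 ^ r := by rw [← mul_pow]; norm_num
  rw [upWeightForm, powerset_univ, ← sum_pow_card_mul_genInf hp₀ hp₁, mul_sum]
  refine sum_le_sum fun S _ => ?_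
  have hI := genInf_nonneg hp₀.le hp₁.le S f
  have hN := hf.upWeight_univ_le hp₀ hp₁ S
  have hN₀ := upWeight_nonneg univ S (coeff p f)
  calc (c / (p * (1 - p))) ^ S.card * (upWeight univ S (coeff p f) * upWeight univ S (coeff p f))
      ≤ (c / (p * (1 - p))) ^ S.card * ((4 ^ r * ((p * (1 - p)) ^ S.card * genInf p S f)) *
          (4 ^ r * ((p * (1 - p)) ^ S.card * genInf p S f))) := by gcongr
    _ = 16 ^ r * genInf p S f * (c ^ S.card * ((p * (1 - p)) ^ S.card * genInf p S f)) := by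
        rw [h16, div_pow]; field_simp
    _ ≤ 16 ^ r * δ * (c ^ S.card * ((p * (1 - p)) ^ S.card * genInf p S f)) := by
        gcongr
        exact hinf S

lemma HasDegreeLE.Ep_pow_four_le (hp₀ : 0 < p) (hp₁ : p < 1) {r : ℕ} {δ : ℝ}
    {f : (Fin n → Bool) → ℝ} (hf : HasDegreeLE p r f) (hinf : ∀ S, genInf p S f ≤ δ) :
    Ep p (fun x => f x ^ 4) ≤ 64 ^ r * δ * Ep p (fun x => f x ^ 2) := by
  have hδ : 0 ≤ δ := (genInf_nonneg hp₀.le hp₁.le ∅ f).trans (hinf ∅)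
  calc Ep p (fun x => f x ^ 4)
      = Ep p (fun x => fourierPoly p univ (coeff p f) x ^ 2 *
          fourierPoly p univ (coeff p f) x ^ 2) := by
        simp only [fourierPoly_univ_coeff hp₀ hp₁, ← pow_add]
    _ ≤ upWeightForm (3 / (p * (1 - p))) univ (coeff p f) (coeff p f) :=
        Ep_fourierPoly_sq_mul_sq_le hp₀ hp₁ univ _ _
    _ ≤ 16 ^ r * δ * stab p (3 + 1) f := hf.upWeightForm_le hp₀ hp₁ hinf zero_le_three
    _ ≤ 16 ^ r * δ * ((3 + 1) ^ r * Ep p (fun x => f x ^ 2)) := by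
        gcongr
        exact hf.stab_le hp₀ hp₁ (by norm_num)
    _ = 64 ^ r * δ * Ep p (fun x => f x ^ 2) := by
        rw [show (64 : ℝ) = 16 * (3 + 1) by norm_num, mul_pow]; ring

end Hypercontractivity

section LevelInequality

variable {p δ : ℝ} {r : ℕ} {f : (Fin n → Bool) → ℝ}

lemma Ep_trunc_sq_pow_three_le (hp₀ : 0 < p) (hp₁ : p < 1)
    (hinf : ∀ S : Finset (Fin n), S.card ≤ r → genInf p S (trunc p r f) ≤ δ) :
    Ep p (fun x => trunc p r f x ^ 2) ^ 3 ≤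
      64 ^ r * δ * (Ep p (fun x => f x ^ 2) ^ 2 * Ep p (fun x => if f x = 0 then 0 else 1)) := by
  set A := Ep p (fun x => trunc p r f x ^ 2)
  set F := Ep p (fun x => f x ^ 2)
  set P := Ep p (fun x => if f x = 0 then 0 else 1)
  have hA : 0 ≤ A := Ep_nonneg hp₀.le hp₁.le fun _ => sq_nonneg _
  have hP : 0 ≤ P := Ep_nonneg hp₀.le hp₁.le fun x => by split_ifs <;> norm_num
  have hdeg : HasDegreeLE p r (trunc p r f) := hasDegreeLE_trunc hp₀ hp₁ f
  have hinf' := hdeg.genInf_le hp₀.le hp₁.le hinf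
  have hδ : 0 ≤ δ := (genInf_nonneg hp₀.le hp₁.le ∅ _).trans (hinf' ∅)
  have key : A ^ 4 ≤ F ^ 2 * P * (64 ^ r * δ * A) :=
    calc A ^ 4 = Ep p (fun x => f x * trunc p r f x) ^ 4 := by rw [Ep_mul_trunc hp₀ hp₁]
      _ ≤ F ^ 2 * P * Ep p (fun x => trunc p r f x ^ 4) :=
          Ep_mul_pow_four_le hp₀.le hp₁.le f (trunc p r f)
      _ ≤ F ^ 2 * P * (64 ^ r * δ * A) := by
          gcongr
          exact hdeg.Ep_pow_four_le hp₀ hp₁ hinf'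
  rcases hA.eq_or_lt with hA₀ | hA₀
  · rw [← hA₀, zero_pow three_ne_zero]
    positivity
  · exact le_of_mul_le_mul_right (by linarith) hA₀

theorem statement8_general (hp₀ : 0 < p) (hp₁ : p < 1) (hval : ∀ x, f x ≠ 0 → 1 ≤ |f x|)
    (hinf : ∀ S : Finset (Fin n), S.card ≤ r → genInf p S (trunc p r f) ≤ δ) :
    Ep p (fun x => trunc p r f x ^ 2) ≤
      4 ^ r * δ ^ ((1 : ℝ) / 3) * Ep p (fun x => f x ^ 2) := by
  have hδ : 0 ≤ δ := (genInf_nonneg hp₀.le hp₁.le ∅ _).trans (hinf ∅ (by simp))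
  have hF : 0 ≤ Ep p (fun x => f x ^ 2) := Ep_nonneg hp₀.le hp₁.le fun _ => sq_nonneg _
  have support_le : Ep p (fun x => if f x = 0 then 0 else 1) ≤ Ep p (fun x => f x ^ 2) :=
    Ep_mono hp₀.le hp₁.le fun x => by
      split_ifs with hx
      · positivity
      · exact one_le_sq_iff_one_le_abs _ |>.2 (hval x hx)
  have cube_root : (δ ^ ((1 : ℝ) / 3)) ^ 3 = δ := by
    rw [← Real.rpow_mul_natCast hδ]; norm_num
  have h64 : (64 : ℝ) ^ r = (4 ^ r) ^ 3 := by rw [pow_right_comm]; norm_num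
  refine le_of_pow_le_pow_left₀ three_ne_zero (by positivity) ?_
  calc Ep p (fun x => trunc p r f x ^ 2) ^ 3
      ≤ 64 ^ r * δ * (Ep p (fun x => f x ^ 2) ^ 2 * Ep p (fun x => f x ^ 2)) :=
        (Ep_trunc_sq_pow_three_le hp₀ hp₁ hinf).trans (by gcongr)
    _ = (4 ^ r * δ ^ ((1 : ℝ) / 3) * Ep p (fun x => f x ^ 2)) ^ 3 := by
        rw [mul_pow, mul_pow, cube_root, h64]; ring

end LevelInequality

/-- low-degree concentration for `{−1,0,1}`-valued functions with small
generalised influences. -/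
theorem statement8 {n : ℕ} (p δ : ℝ) (r : ℕ) (hp : 0 < p) (hp' : p ≤ 1/2)
    (hr : 1 ≤ r) (hδ : 0 < δ)
    (f : (Fin n → Bool) → ℝ) (hval : ∀ x, f x = -1 ∨ f x = 0 ∨ f x = 1)
    (hinf : ∀ S : Finset (Fin n), S.card ≤ r → genInf p S (trunc p r f) ≤ δ) :
    Ep p (fun x => trunc p r f x ^ 2) ≤
      (5 : ℝ) ^ r * δ ^ ((1 : ℝ)/3) * Ep p (fun x => f x ^ 2) := by
  have hF := Ep_nonneg hp.le (by linarith) fun x => sq_nonneg (f x)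
  exact (statement8_general hp (by linarith) (by grind) hinf).trans (by gcongr; norm_num)

end GlobalHC
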